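/- Let p ∈ Δ*_m, q ∈ Δ*_n, c ∈ ℝ^{m×n}, and fix κ ∈ (0,1). Consider the annealing schedule β_t = (1+t)^κ with α_t = β_t − β_{t−1}, let π^reg_t be the unique minimizer over Γ(*,q) of F^reg_t(π) = ⟨c,π⟩ + (1/α_t) KL(π𝟙|p) + (1/β_t) KL(π|π^ref), and let π̄_t = proj_{Γ(p,q)}(π^reg_t) be the output of the rounding procedure (Algorithm 3). Then there exists a constant C (depending on m, n, p, c, κ) such that for all t ≥ 1: ⟨c, π̄_t⟩ − OT(p,q) ≤ C (t^{−κ} + t^{κ−1}). -/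

import Mathlib

open Finset Filter Topology ENNReal

noncomputable section

/-- Frobenius inner product `⟨c, π⟩ = ∑_{ij} c_ij π_ij`. -/
def frob {m n : ℕ} (c π : Matrix (Fin m) (Fin n) ℝ) : ℝ := ∑ i, ∑ j, c i j * π i j

/-- Row sums `π𝟙`. -/
def rowSum {m n : ℕ} (π : Matrix (Fin m) (Fin n) ℝ) : Fin m → ℝ := fun i => ∑ j, π i j

/-- Column sums `πᵀ𝟙`. -/
def colSum {m n : ℕ} (π : Matrix (Fin m) (Fin n) ℝ) : Fin n → ℝ := fun j => ∑ i, π i j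

/-- Kullback–Leibler divergence between nonnegative vectors. -/
def KLvec {k : ℕ} (a b : Fin k → ℝ) : ℝ := ∑ i, (a i * Real.log (a i / b i) - a i + b i)

/-- Kullback–Leibler divergence between nonnegative matrices. -/
def KLmat {m n : ℕ} (a b : Matrix (Fin m) (Fin n) ℝ) : ℝ :=
  ∑ i, ∑ j, (a i j * Real.log (a i j / b i j) - a i j + b i j)

/-- The tipless simplex `Δ*_k`: strictly positive entries summing to 1. -/
def simplexPos (k : ℕ) : Set (Fin k → ℝ) := {p | (∀ i, 0 < p i) ∧ ∑ i, p i = 1}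

/-- The simplex `Δ_k`: nonnegative entries summing to 1. -/
def simplexNN (k : ℕ) : Set (Fin k → ℝ) := {p | (∀ i, 0 ≤ p i) ∧ ∑ i, p i = 1}

/-- Transport plans `Γ(p, q)`. -/
def Gamma {m n : ℕ} (p : Fin m → ℝ) (q : Fin n → ℝ) : Set (Matrix (Fin m) (Fin n) ℝ) :=
  {π | (∀ i j, 0 ≤ π i j) ∧ rowSum π = p ∧ colSum π = q}

/-- Half-relaxed plans `Γ(*, q)`. -/
def GammaStar {m n : ℕ} (q : Fin n → ℝ) : Set (Matrix (Fin m) (Fin n) ℝ) :=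
  {π | (∀ i j, 0 ≤ π i j) ∧ colSum π = q}

/-- Reference plan `π^ref = (mn)⁻¹ 𝟙𝟙ᵀ`. -/
def piRef (m n : ℕ) : Matrix (Fin m) (Fin n) ℝ := fun _ _ => 1 / (m * n)

/-- Optimal transport value `OT(p,q)`. -/
def OTval {m n : ℕ} (c : Matrix (Fin m) (Fin n) ℝ) (p : Fin m → ℝ) (q : Fin n → ℝ) : ℝ :=
  ⨅ π : Gamma p q, frob c π.1

/-- Entropic OT objective `⟨c,π⟩ + β⁻¹ KL(π|π^ref)`. -/
def eotObj {m n : ℕ} (c : Matrix (Fin m) (Fin n) ℝ) (β : ℝ) (π : Matrix (Fin m) (Fin n) ℝ) : ℝ :=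
  frob c π + β⁻¹ * KLmat π (piRef m n)

/-- Entropic OT value `EOT_β(p,q)`. -/
def eotVal {m n : ℕ} (c : Matrix (Fin m) (Fin n) ℝ) (β : ℝ) (p : Fin m → ℝ) (q : Fin n → ℝ) : ℝ :=
  ⨅ π : Gamma p q, eotObj c β π.1

/-- Gibbs kernel `K = e^{-βc}` (entrywise). -/
def gibbs {m n : ℕ} (c : Matrix (Fin m) (Fin n) ℝ) (β : ℝ) : Matrix (Fin m) (Fin n) ℝ :=
  fun i j => Real.exp (-(β * c i j))

/-- Annealed Sinkhorn scaling vectors `(a_t, b_t)`: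
`b_0 = 𝟙`, `a_{t+1} = p ⊘ (K_t b_t)`, `b_{t+1} = q ⊘ (K_{t+1}ᵀ a_{t+1})`, `K_t = e^{-β_t c}`. -/
def sinkAB {m n : ℕ} (p : Fin m → ℝ) (q : Fin n → ℝ) (c : Matrix (Fin m) (Fin n) ℝ)
    (β : ℕ → ℝ) : ℕ → (Fin m → ℝ) × (Fin n → ℝ)
  | 0 => (fun _ => 1, fun _ => 1)
  | t + 1 =>
    let prev := sinkAB p q c β t
    let a : Fin m → ℝ := fun i => p i / ∑ j, gibbs c (β t) i j * prev.2 j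
    (a, fun j => q j / ∑ i, gibbs c (β (t + 1)) i j * a i)

/-- Annealed Sinkhorn primal iterate `π_t = diag(a_t) K_t diag(b_t)`. -/
def sinkPlan {m n : ℕ} (p : Fin m → ℝ) (q : Fin n → ℝ) (c : Matrix (Fin m) (Fin n) ℝ)
    (β : ℕ → ℝ) (t : ℕ) : Matrix (Fin m) (Fin n) ℝ :=
  fun i j => (sinkAB p q c β t).1 i * gibbs c (β t) i j * (sinkAB p q c β t).2 j

/-- `ℓ¹` norm of a vector. -/
def l1vec {k : ℕ} (a : Fin k → ℝ) : ℝ := ∑ i, |a i|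

/-- Oscillation semi-norm `‖c‖_osc = max c - min c`. -/
def cOsc {m n : ℕ} (c : Matrix (Fin m) (Fin n) ℝ) : ℝ :=
  (⨆ i, ⨆ j, c i j) - ⨅ i, ⨅ j, c i j

/-- `‖log p‖_∞`. -/
def logSup {k : ℕ} (p : Fin k → ℝ) : ℝ := ⨆ i, |Real.log (p i)|

/-- The rounding ("projection") procedure of Altschuler et al. (Algorithm 3). -/
def roundPlan {m n : ℕ} (p : Fin m → ℝ) (q : Fin n → ℝ) (π : Matrix (Fin m) (Fin n) ℝ) :
    Matrix (Fin m) (Fin n) ℝ :=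
  let π' : Matrix (Fin m) (Fin n) ℝ := fun i j => min 1 (p i / rowSum π i) * π i j
  let π'' : Matrix (Fin m) (Fin n) ℝ := fun i j => π' i j * min 1 (q j / colSum π' j)
  fun i j => π'' i j +
    (p i - rowSum π'' i) * (q j - colSum π'' j) / l1vec (fun i' => p i' - rowSum π'' i')

/-- Relaxed entropic objective `F^reg(π) = ⟨c,π⟩ + α⁻¹ KL(π𝟙|p) + β⁻¹ KL(π|π^ref)`. -/
def Freg {m n : ℕ} (c : Matrix (Fin m) (Fin n) ℝ) (p : Fin m → ℝ) (α β : ℝ)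
    (π : Matrix (Fin m) (Fin n) ℝ) : ℝ :=
  frob c π + α⁻¹ * KLvec (rowSum π) p + β⁻¹ * KLmat π (piRef m n)

/-- Dual functional for the relaxed entropic problem. -/
def dualFun {m n : ℕ} (p : Fin m → ℝ) (q : Fin n → ℝ) (c : Matrix (Fin m) (Fin n) ℝ)
    (α β : ℝ) (u : Fin m → ℝ) (v : Fin n → ℝ) : ℝ :=
  α⁻¹ * (∑ i, (1 - Real.exp (-(α * u i))) * p i) + ∑ j, v j * q j
    - β⁻¹ * (∑ i, ∑ j, Real.exp (β * (u i + v j - c i j)) * piRef m n i j) + β⁻¹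

/-- Dual functional of entropic OT. -/
def eotDual {m n : ℕ} (p : Fin m → ℝ) (q : Fin n → ℝ) (c : Matrix (Fin m) (Fin n) ℝ)
    (β : ℝ) (u : Fin m → ℝ) (v : Fin n → ℝ) : ℝ :=
  ∑ i, p i * u i + ∑ j, q j * v j
    + β⁻¹ * (1 - ∑ i, ∑ j, piRef m n i j * Real.exp (β * (u i + v j - c i j)))

/-- The set `C_β` of plans of the form `diag(a) e^{-βc} diag(b)` with `a, b ≥ 0`. -/
def scalingSet {m n : ℕ} (c : Matrix (Fin m) (Fin n) ℝ) (β : ℝ) :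
    Set (Matrix (Fin m) (Fin n) ℝ) :=
  {π | ∃ a : Fin m → ℝ, ∃ b : Fin n → ℝ, (∀ i, 0 ≤ a i) ∧ (∀ j, 0 ≤ b j) ∧
    π = fun i j => a i * Real.exp (-(β * c i j)) * b j}

/-!
Write `r` for the row sums of the minimizer `π` and `L i = log (r i / p i)`. Comparing `π` with the
plan `π'` obtained by moving mass `s` inside column `j` from row `i` to row `k` gives, by convexity,
an inequality between two entries of the gradient of `F^reg` at `π'`. As `s → 0` it shows first that
`π` has no zero entry (the logarithm would drop to `-∞`), then that the gradient
`c i j + α⁻¹ L i + β⁻¹ log (π i j / π^ref i j)` does not depend on `i`. In some column `j` the ratio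
`π i j / π k j` is at least its average `r i / r k`, and there stationarity bounds `L i - L k` by
`α (‖c‖_osc + 2 β⁻¹ ‖log p‖_∞)`. Since `p` and `r` have the same mass, some `L i` is nonnegative, so
every `L k` is `O(α)` from below and only a mass `O(α)` of `p` is missing from `r`. Rounding moves
exactly this mass and so costs `O(α)`, while comparison with an optimal plan costs `β⁻¹ log (m n)`.
-/

section KullbackLeibler

theorem mul_log_div_sub_add_nonneg {a b : ℝ} (ha : 0 ≤ a) (hb : 0 ≤ b) (hab : b = 0 → a = 0) :
    0 ≤ a * Real.log (a / b) - a + b := by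
  rcases hb.eq_or_lt with rfl | hb
  · simp [hab rfl]
  · have h : a * Real.log (a / b) - a + b = b * InformationTheory.klFun (a / b) := by
      rw [InformationTheory.klFun]
      field_simp
      ring
    rw [h]
    exact mul_nonneg hb.le (InformationTheory.klFun_nonneg (div_nonneg ha hb.le))

theorem mul_log_div_sub_add_three_point {a b w : ℝ} (hw : w ≠ 0) (hab : b = 0 → a = 0) :
    a * Real.log (a / w) - a + w =
      (b * Real.log (b / w) - b + w) + Real.log (b / w) * (a - b) +
        (a * Real.log (a / b) - a + b) := by
  by_cases hb : b = 0
  · simp [hb, hab hb]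
  by_cases ha : a = 0
  · simp only [ha, zero_mul]
    ring
  rw [Real.log_div ha hw, Real.log_div hb hw, Real.log_div ha hb]
  ring

theorem KLvec_nonneg {k : ℕ} {a b : Fin k → ℝ} (ha : ∀ i, 0 ≤ a i) (hb : ∀ i, 0 ≤ b i)
    (hab : ∀ i, b i = 0 → a i = 0) : 0 ≤ KLvec a b :=
  sum_nonneg fun i _ => mul_log_div_sub_add_nonneg (ha i) (hb i) (hab i)

theorem KLvec_self {k : ℕ} (a : Fin k → ℝ) : KLvec a a = 0 := by
  refine sum_eq_zero fun i _ => ?_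
  by_cases h : a i = 0 <;> simp [h]

theorem KLvec_three_point {k : ℕ} {a b w : Fin k → ℝ} (hw : ∀ i, w i ≠ 0)
    (hab : ∀ i, b i = 0 → a i = 0) :
    KLvec a w = KLvec b w + ∑ i, Real.log (b i / w i) * (a i - b i) + KLvec a b := by
  simp only [KLvec, ← sum_add_distrib]
  exact sum_congr rfl fun i _ => mul_log_div_sub_add_three_point (hw i) (hab i)

variable {m n : ℕ}

theorem KLmat_eq_sum_KLvec (a b : Matrix (Fin m) (Fin n) ℝ) :
    KLmat a b = ∑ i, KLvec (a i) (b i) :=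
  rfl

theorem KLmat_nonneg {a b : Matrix (Fin m) (Fin n) ℝ} (ha : ∀ i j, 0 ≤ a i j)
    (hb : ∀ i j, 0 ≤ b i j) (hab : ∀ i j, b i j = 0 → a i j = 0) : 0 ≤ KLmat a b :=
  sum_nonneg fun i _ => KLvec_nonneg (ha i) (hb i) (hab i)

theorem KLmat_three_point {a b w : Matrix (Fin m) (Fin n) ℝ} (hw : ∀ i j, w i j ≠ 0)
    (hab : ∀ i j, b i j = 0 → a i j = 0) :
    KLmat a w =
      KLmat b w + frob (fun i j => Real.log (b i j / w i j)) (a - b) + KLmat a b := by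
  simp only [KLmat_eq_sum_KLvec, frob, ← sum_add_distrib]
  exact sum_congr rfl fun i _ => KLvec_three_point (hw i) (hab i)

theorem piRef_pos (i : Fin m) (j : Fin n) : 0 < piRef m n i j := by
  have hm : (0 : ℝ) < m := by exact_mod_cast i.pos
  have hn : (0 : ℝ) < n := by exact_mod_cast j.pos
  exact div_pos one_pos (mul_pos hm hn)

theorem sum_piRef_le_one (m n : ℕ) : ∑ i, ∑ j, piRef m n i j ≤ 1 := by
  simpa [piRef, ← mul_assoc, mul_comm] using mul_inv_le_one (a := (m * n : ℝ))

theorem KLmat_piRef_le_log {x : Matrix (Fin m) (Fin n) ℝ} (hx : ∀ i j, 0 ≤ x i j)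
    (hsum : ∑ i, ∑ j, x i j = 1) : KLmat x (piRef m n) ≤ Real.log (m * n) := by
  have le_one : ∀ i j, x i j ≤ 1 := fun i j =>
    calc x i j ≤ ∑ j, x i j := single_le_sum (fun j _ => hx i j) (mem_univ j)
      _ ≤ ∑ i, ∑ j, x i j :=
        single_le_sum (f := fun i => ∑ j, x i j) (fun i _ => sum_nonneg fun j _ => hx i j)
          (mem_univ i)
      _ = 1 := hsum
  have mul_log_le : ∀ i j, x i j * Real.log (x i j / piRef m n i j) ≤
      x i j * Real.log (m * n) := fun i j => by
    rcases (hx i j).eq_or_lt with h | h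
    · simp [← h]
    · refine mul_le_mul_of_nonneg_left (Real.log_le_log (div_pos h (piRef_pos i j)) ?_) h.le
      rw [piRef, div_div_eq_mul_div, div_one]
      exact mul_le_of_le_one_left (by positivity) (le_one i j)
  calc KLmat x (piRef m n)
      ≤ ∑ i, ∑ j, (x i j * Real.log (m * n) - x i j + piRef m n i j) :=
        sum_le_sum fun i _ => sum_le_sum fun j _ => by linarith [mul_log_le i j]
    _ = Real.log (m * n) - 1 + ∑ i, ∑ j, piRef m n i j := by
        simp only [sum_add_distrib, sum_sub_distrib, ← sum_mul, hsum, one_mul]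
    _ ≤ Real.log (m * n) := by linarith [sum_piRef_le_one m n]

end KullbackLeibler

section CostAndMarginals

variable {m n : ℕ} (c π π' : Matrix (Fin m) (Fin n) ℝ)

theorem frob_add : frob c (π + π') = frob c π + frob c π' := by
  simp only [frob, Matrix.add_apply, mul_add, sum_add_distrib]

theorem frob_sub : frob c (π - π') = frob c π - frob c π' := by
  simp only [frob, Matrix.sub_apply, mul_sub, sum_sub_distrib]

theorem frob_single (i : Fin m) (j : Fin n) (s : ℝ) :
    frob c (Matrix.single i j s) = c i j * s := by
  simp [frob, Matrix.single_apply, ite_and]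

theorem le_iSup_iSup_apply (i : Fin m) (j : Fin n) : c i j ≤ ⨆ i, ⨆ j, c i j :=
  (le_ciSup (Set.finite_range (c i)).bddAbove j).trans
    (le_ciSup (f := fun i => ⨆ j, c i j) (Set.finite_range _).bddAbove i)

theorem iInf_iInf_apply_le (i : Fin m) (j : Fin n) : ⨅ i, ⨅ j, c i j ≤ c i j :=
  (ciInf_le (f := fun i => ⨅ j, c i j) (Set.finite_range _).bddBelow i).trans
    (ciInf_le (Set.finite_range (c i)).bddBelow j)

theorem sub_le_cOsc (i k : Fin m) (j l : Fin n) : c i j - c k l ≤ cOsc c :=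
  sub_le_sub (le_iSup_iSup_apply c i j) (iInf_iInf_apply_le c k l)

theorem cOsc_nonneg : 0 ≤ cOsc c := by
  rcases isEmpty_or_nonempty (Fin m) with _ | ⟨⟨i⟩⟩
  · simp [cOsc]
  rcases isEmpty_or_nonempty (Fin n) with _ | ⟨⟨j⟩⟩
  · simp [cOsc]
  simpa using sub_le_cOsc c i i j j

theorem abs_log_le_logSup {k : ℕ} (p : Fin k → ℝ) (i : Fin k) : |Real.log (p i)| ≤ logSup p :=
  le_ciSup (f := fun i => |Real.log (p i)|) (Set.finite_range _).bddAbove i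

theorem logSup_nonneg {k : ℕ} (p : Fin k → ℝ) : 0 ≤ logSup p :=
  Real.iSup_nonneg fun _ => abs_nonneg _

variable {π π'}

theorem frob_sub_frob_le_cOsc_mul (hπ : ∀ i j, 0 ≤ π i j) (hπ' : ∀ i j, 0 ≤ π' i j)
    (hmass : ∑ i, ∑ j, π i j = ∑ i, ∑ j, π' i j) :
    frob c π - frob c π' ≤ cOsc c * ∑ i, ∑ j, π i j := by
  have upper : frob c π ≤ (⨆ i, ⨆ j, c i j) * ∑ i, ∑ j, π i j := by
    simp only [frob, mul_sum]
    exact sum_le_sum fun i _ => sum_le_sum fun j _ =>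
      mul_le_mul_of_nonneg_right (le_iSup_iSup_apply c i j) (hπ i j)
  have lower : (⨅ i, ⨅ j, c i j) * ∑ i, ∑ j, π' i j ≤ frob c π' := by
    simp only [frob, mul_sum]
    exact sum_le_sum fun i _ => sum_le_sum fun j _ =>
      mul_le_mul_of_nonneg_right (iInf_iInf_apply_le c i j) (hπ' i j)
  rw [← hmass] at lower
  rw [cOsc, sub_mul]
  exact sub_le_sub upper lower

theorem sum_colSum (π : Matrix (Fin m) (Fin n) ℝ) : ∑ j, colSum π j = ∑ i, rowSum π i :=
  sum_comm

theorem rowSum_nonneg (hπ : ∀ i j, 0 ≤ π i j) (i : Fin m) : 0 ≤ rowSum π i :=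
  sum_nonneg fun j _ => hπ i j

theorem le_rowSum (hπ : ∀ i j, 0 ≤ π i j) (i : Fin m) (j : Fin n) : π i j ≤ rowSum π i :=
  single_le_sum (fun j _ => hπ i j) (mem_univ j)

theorem colSum_nonneg (hπ : ∀ i j, 0 ≤ π i j) (j : Fin n) : 0 ≤ colSum π j :=
  sum_nonneg fun i _ => hπ i j

theorem le_colSum (hπ : ∀ i j, 0 ≤ π i j) (i : Fin m) (j : Fin n) : π i j ≤ colSum π j :=
  single_le_sum (f := fun i => π i j) (fun i _ => hπ i j) (mem_univ i)

theorem sum_rowSum_of_mem_GammaStar {q : Fin n → ℝ} (hπ : π ∈ GammaStar q) :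
    ∑ i, rowSum π i = ∑ j, q j := by
  rw [← sum_colSum, hπ.2]

theorem nonempty_Gamma {p : Fin m → ℝ} {q : Fin n → ℝ} (hp : p ∈ simplexPos m)
    (hq : q ∈ simplexPos n) : Nonempty (Gamma p q) := by
  refine ⟨fun i j => p i * q j, fun i j => (mul_pos (hp.1 i) (hq.1 j)).le, ?_, ?_⟩
  · funext i
    simp only [rowSum, ← mul_sum, hq.2, mul_one]
  · funext j
    simp only [colSum, ← sum_mul, hp.2, one_mul]

end CostAndMarginals

section FirstOrder

variable {m n : ℕ} {p : Fin m → ℝ} {q : Fin n → ℝ} {c : Matrix (Fin m) (Fin n) ℝ} {α β : ℝ}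

/-- The gradient of `F^reg` at `π`, for the Frobenius inner product. It is meaningful where `π` has
positive entries; at a zero entry the junk value `log 0 = 0` replaces `-∞`. -/
def gradFreg (c : Matrix (Fin m) (Fin n) ℝ) (p : Fin m → ℝ) (α β : ℝ)
    (π : Matrix (Fin m) (Fin n) ℝ) : Matrix (Fin m) (Fin n) ℝ := fun i j =>
  c i j + α⁻¹ * Real.log (rowSum π i / p i) + β⁻¹ * Real.log (π i j / piRef m n i j)

theorem frob_gradFreg (π δ : Matrix (Fin m) (Fin n) ℝ) :
    frob (gradFreg c p α β π) δ =
      frob c δ + α⁻¹ * ∑ i, Real.log (rowSum π i / p i) * rowSum δ i +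
        β⁻¹ * frob (fun i j => Real.log (π i j / piRef m n i j)) δ := by
  simp only [frob, gradFreg, rowSum, mul_sum, ← sum_add_distrib]
  exact sum_congr rfl fun i _ => sum_congr rfl fun j _ => by ring

theorem Freg_add_frob_gradFreg_le (hp : ∀ i, p i ≠ 0) (hα : 0 ≤ α) (hβ : 0 ≤ β)
    {x y : Matrix (Fin m) (Fin n) ℝ} (hx : ∀ i j, 0 ≤ x i j) (hy : ∀ i j, 0 ≤ y i j)
    (hxy : ∀ i j, y i j = 0 → x i j = 0) :
    Freg c p α β y + frob (gradFreg c p α β y) (x - y) ≤ Freg c p α β x := by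
  have hrow : ∀ i, rowSum y i = 0 → rowSum x i = 0 := fun i h =>
    sum_eq_zero fun j _ =>
      hxy i j ((sum_eq_zero_iff_of_nonneg fun j _ => hy i j).1 h j (mem_univ j))
  have row_sub : ∀ i, rowSum (x - y) i = rowSum x i - rowSum y i := fun i =>
    sum_sub_distrib (x i) (y i)
  have hKLvec := mul_nonneg (inv_nonneg.2 hα)
    (KLvec_nonneg (rowSum_nonneg hx) (rowSum_nonneg hy) hrow)
  have hKLmat := mul_nonneg (inv_nonneg.2 hβ) (KLmat_nonneg hx hy hxy)
  rw [frob_gradFreg, frob_sub c, Freg, Freg, KLvec_three_point hp hrow,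
    KLmat_three_point (fun i j => (piRef_pos i j).ne') hxy]
  simp only [row_sub, mul_add]
  linarith

/-- The competitor obtained from `π` by moving mass `s` from entry `(i, j)` to entry `(k, j)`, which
leaves the column sums unchanged. -/
def transfer (π : Matrix (Fin m) (Fin n) ℝ) (i k : Fin m) (j : Fin n) (s : ℝ) :
    Matrix (Fin m) (Fin n) ℝ :=
  π - Matrix.single i j s + Matrix.single k j s

variable {π : Matrix (Fin m) (Fin n) ℝ} {i k : Fin m} {j : Fin n} {s : ℝ}

theorem transfer_apply (a : Fin m) (b : Fin n) :
    transfer π i k j s a b =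
      π a b - (if i = a ∧ j = b then s else 0) + (if k = a ∧ j = b then s else 0) := by
  simp only [transfer, Matrix.add_apply, Matrix.sub_apply, Matrix.single_apply]

theorem rowSum_transfer (a : Fin m) :
    rowSum (transfer π i k j s) a =
      rowSum π a - (if i = a then s else 0) + (if k = a then s else 0) := by
  simp [rowSum, transfer_apply, sum_add_distrib, sum_sub_distrib, ite_and]

theorem colSum_transfer : colSum (transfer π i k j s) = colSum π := by
  funext b
  simp [colSum, transfer_apply, sum_add_distrib, sum_sub_distrib, ite_and]

theorem transfer_pos_or_le_transfer (hs : 0 ≤ s) (hsij : s < π i j) (a : Fin m) (b : Fin n) :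
    0 < transfer π i k j s a b ∨ π a b ≤ transfer π i k j s a b := by
  have gain_nonneg : 0 ≤ if k = a ∧ j = b then s else 0 := by positivity
  rw [transfer_apply]
  by_cases h : i = a ∧ j = b
  · obtain ⟨rfl, rfl⟩ := h
    left
    rw [if_pos ⟨rfl, rfl⟩]
    linarith
  · right
    rw [if_neg h]
    linarith

theorem transfer_nonneg (hπ : ∀ i j, 0 ≤ π i j) (hs : 0 ≤ s) (hsij : s < π i j) (a : Fin m)
    (b : Fin n) : 0 ≤ transfer π i k j s a b :=
  (transfer_pos_or_le_transfer hs hsij a b).elim le_of_lt (hπ a b).trans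

theorem transfer_mem_GammaStar (hπ : π ∈ GammaStar q) (hs : 0 ≤ s) (hsij : s < π i j) :
    transfer π i k j s ∈ GammaStar q :=
  ⟨transfer_nonneg hπ.1 hs hsij, colSum_transfer.trans hπ.2⟩

theorem gradFreg_transfer_le (hp : ∀ i, p i ≠ 0) (hα : 0 ≤ α) (hβ : 0 ≤ β) (hπ : π ∈ GammaStar q)
    (hmin : IsMinOn (Freg c p α β) (GammaStar q) π) (hs : 0 < s) (hsij : s < π i j) :
    gradFreg c p α β (transfer π i k j s) i j ≤ gradFreg c p α β (transfer π i k j s) k j := by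
  set y := transfer π i k j s with hy
  have support : ∀ a b, y a b = 0 → π a b = 0 := fun a b h =>
    (transfer_pos_or_le_transfer hs.le hsij a b).elim (fun hlt => absurd h hlt.ne')
      fun hle => le_antisymm (hle.trans_eq h) (hπ.1 a b)
  have convexity : Freg c p α β y + frob (gradFreg c p α β y) (π - y) ≤ Freg c p α β π :=
    Freg_add_frob_gradFreg_le hp hα hβ hπ.1 (transfer_nonneg hπ.1 hs.le hsij) support
  have minimality : Freg c p α β π ≤ Freg c p α β y :=
    hmin (transfer_mem_GammaStar hπ hs.le hsij)
  have hdiff : π - y = Matrix.single i j s - Matrix.single k j s := by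
    rw [hy, transfer]
    abel
  rw [hdiff, frob_sub, frob_single, frob_single] at convexity
  exact le_of_mul_le_mul_right (by linarith) hs

theorem tendsto_gradFreg_transfer (hp : ∀ i, p i ≠ 0) {a : Fin m} {b : Fin n}
    (hrow : rowSum π a ≠ 0) (hab : π a b ≠ 0) :
    Tendsto (fun s => gradFreg c p α β (transfer π i k j s) a b) (𝓝[>] 0)
      (𝓝 (gradFreg c p α β π a b)) := by
  have entry : Tendsto (fun s => transfer π i k j s a b) (𝓝 0) (𝓝 (π a b)) := by
    have h : Continuous fun s => transfer π i k j s a b := by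
      simp only [transfer_apply]
      split_ifs <;> fun_prop
    simpa [transfer_apply] using h.tendsto 0
  have row : Tendsto (fun s => rowSum (transfer π i k j s) a) (𝓝 0) (𝓝 (rowSum π a)) := by
    have h : Continuous fun s => rowSum (transfer π i k j s) a := by
      simp only [rowSum_transfer]
      split_ifs <;> fun_prop
    simpa [rowSum_transfer] using h.tendsto 0
  have logRow := (row.div_const (p a)).log (div_ne_zero hrow (hp a))
  have logEntry := (entry.div_const (piRef m n a b)).log (div_ne_zero hab (piRef_pos a b).ne')
  exact ((logRow.const_mul α⁻¹).const_add (c a b) |>.add (logEntry.const_mul β⁻¹)).mono_left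
    nhdsWithin_le_nhds

theorem tendsto_gradFreg_transfer_atBot (hp : ∀ i, 0 < p i) (hα : 0 ≤ α) (hβ : 0 < β)
    (hrow : 0 ≤ rowSum π k) (hik : i ≠ k) (hkj : π k j = 0) :
    Tendsto (fun s => gradFreg c p α β (transfer π i k j s) k j) (𝓝[>] 0) atBot := by
  have log_atBot : Tendsto (fun s => β⁻¹ * Real.log (s / piRef m n k j)) (𝓝[>] 0) atBot := by
    refine Tendsto.const_mul_atBot (inv_pos.2 hβ) (Real.tendsto_log_nhdsGT_zero.comp ?_)
    refine tendsto_nhdsWithin_iff.2 ⟨?_, ?_⟩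
    · simpa using ((continuous_id.div_const (piRef m n k j)).tendsto 0).mono_left
        nhdsWithin_le_nhds
    · filter_upwards [self_mem_nhdsWithin] with s hs using div_pos hs (piRef_pos k j)
  refine tendsto_atBot_mono' _ ?_
    (tendsto_atBot_add_const_left _ (c k j + α⁻¹ * Real.log ((rowSum π k + 1) / p k)) log_atBot)
  filter_upwards [Ioo_mem_nhdsGT one_pos] with s hs
  have hpk := hp k
  have entry : transfer π i k j s k j = s := by simp [transfer_apply, hik, hkj]
  have row : rowSum (transfer π i k j s) k = rowSum π k + s := by simp [rowSum_transfer, hik]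
  have row_pos : 0 < rowSum π k + s := add_pos_of_nonneg_of_pos hrow hs.1
  rw [gradFreg, entry, row]
  gcongr
  exact hs.2.le

theorem pos_of_isMinOn_Freg (hp : ∀ i, 0 < p i) (hq : ∀ j, 0 < q j) (hα : 0 ≤ α) (hβ : 0 < β)
    (hπ : π ∈ GammaStar q) (hmin : IsMinOn (Freg c p α β) (GammaStar q) π) (k : Fin m)
    (j : Fin n) : 0 < π k j := by
  refine (hπ.1 k j).lt_of_ne' fun hkj => ?_
  obtain ⟨i, -, hij⟩ : ∃ i ∈ univ, 0 < π i j := by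
    refine exists_lt_of_sum_lt ?_
    rw [sum_const_zero]
    exact (hq j).trans_eq (congrFun hπ.2 j).symm
  have hik : i ≠ k := by
    rintro rfl
    exact hij.ne' hkj
  have hp' : ∀ i, p i ≠ 0 := fun i => (hp i).ne'
  have finite := tendsto_gradFreg_transfer (c := c) (α := α) (β := β) (i := i) (k := k) (j := j)
    hp' (hij.trans_le (le_rowSum hπ.1 i j)).ne' hij.ne'
  have infinite := tendsto_gradFreg_transfer_atBot (c := c) hp hα hβ (rowSum_nonneg hπ.1 k) hik hkj
  refine not_tendsto_nhds_of_tendsto_atBot (tendsto_atBot_mono' _ ?_ infinite) _ finite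
  filter_upwards [Ioo_mem_nhdsGT hij] with s hs
  exact gradFreg_transfer_le hp' hα hβ.le hπ hmin hs.1 hs.2

theorem gradFreg_le_of_isMinOn (hp : ∀ i, p i ≠ 0) (hα : 0 ≤ α) (hβ : 0 ≤ β)
    (hπ : π ∈ GammaStar q) (hmin : IsMinOn (Freg c p α β) (GammaStar q) π)
    (hpos : ∀ i j, 0 < π i j) (i k : Fin m) (j : Fin n) :
    gradFreg c p α β π i j ≤ gradFreg c p α β π k j := by
  have row_ne : ∀ a, rowSum π a ≠ 0 := fun a => ((hpos a j).trans_le (le_rowSum hπ.1 a j)).ne'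
  refine le_of_tendsto_of_tendsto
    (tendsto_gradFreg_transfer (i := i) (k := k) (j := j) hp (row_ne i) (hpos i j).ne')
    (tendsto_gradFreg_transfer (i := i) (k := k) (j := j) hp (row_ne k) (hpos k j).ne') ?_
  filter_upwards [Ioo_mem_nhdsGT (hpos i j)] with s hs
  exact gradFreg_transfer_le hp hα hβ hπ hmin hs.1 hs.2

end FirstOrder

section RowMarginal

variable {m n : ℕ} {p : Fin m → ℝ} {q : Fin n → ℝ} {c : Matrix (Fin m) (Fin n) ℝ} {α β : ℝ}
  {π : Matrix (Fin m) (Fin n) ℝ}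

theorem exists_log_rowSum_sub_le [Nonempty (Fin n)] (hpos : ∀ i j, 0 < π i j) (i k : Fin m) :
    ∃ j, Real.log (rowSum π i) - Real.log (rowSum π k) ≤
      Real.log (π i j) - Real.log (π k j) := by
  have row_pos : ∀ a, 0 < rowSum π a := fun a => sum_pos (fun j _ => hpos a j) univ_nonempty
  obtain ⟨j, -, hj⟩ : ∃ j ∈ univ, rowSum π i * π k j ≤ rowSum π k * π i j := by
    refine exists_le_of_sum_le univ_nonempty ?_
    rw [← mul_sum, ← mul_sum]
    exact (mul_comm _ _).le
  have hlog := Real.log_le_log (mul_pos (row_pos i) (hpos k j)) hj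
  rw [Real.log_mul (row_pos i).ne' (hpos k j).ne', Real.log_mul (row_pos k).ne' (hpos i j).ne']
    at hlog
  exact ⟨j, by linarith⟩

theorem log_rowSum_div_sub_le [Nonempty (Fin n)] (hp : ∀ i, 0 < p i) (hα : 0 < α) (hβ : 0 < β)
    (hpos : ∀ i j, 0 < π i j) {i k : Fin m}
    (hgrad : ∀ j, gradFreg c p α β π i j ≤ gradFreg c p α β π k j) :
    Real.log (rowSum π i / p i) - Real.log (rowSum π k / p k) ≤
      α * (cOsc c + 2 * β⁻¹ * logSup p) := by
  have row_pos : ∀ a, 0 < rowSum π a := fun a => sum_pos (fun j _ => hpos a j) univ_nonempty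
  obtain ⟨j, hj⟩ := exists_log_rowSum_sub_le hpos i k
  set d := Real.log (rowSum π i / p i) - Real.log (rowSum π k / p k) with hd
  have entry_ratio : d - 2 * logSup p ≤ Real.log (π i j) - Real.log (π k j) := by
    rw [hd, Real.log_div (row_pos i).ne' (hp i).ne', Real.log_div (row_pos k).ne' (hp k).ne']
    linarith [neg_le_of_abs_le (abs_log_le_logSup p i), le_of_abs_le (abs_log_le_logSup p k)]
  have stationarity : α⁻¹ * d + β⁻¹ * (Real.log (π i j) - Real.log (π k j)) ≤ cOsc c := by
    have h := hgrad j
    simp only [gradFreg, Real.log_div (hpos _ j).ne' (piRef_pos _ j).ne'] at h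
    have href : piRef m n i j = piRef m n k j := rfl
    rw [href] at h
    linarith [sub_le_cOsc c k i j j]
  have hK : 0 ≤ cOsc c + 2 * β⁻¹ * logSup p := by
    have := cOsc_nonneg c
    have := logSup_nonneg p
    positivity
  rcases le_total d 0 with hd0 | hd0
  · exact hd0.trans (mul_nonneg hα.le hK)
  · rw [← inv_mul_le_iff₀ hα]
    have := mul_le_mul_of_nonneg_left entry_ratio (inv_pos.2 hβ).le
    have := mul_nonneg (inv_pos.2 hβ).le hd0
    linarith

/-- The mass of `p` that the row sums of `π` fail to reach, that is `‖Δ_p‖₁` in Algorithm 3. -/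
def rowDeficit (p : Fin m → ℝ) (π : Matrix (Fin m) (Fin n) ℝ) : ℝ := ∑ i, (p i - rowSum π i)⁺

theorem sub_le_mul_of_neg_log_div_le {a b ε : ℝ} (ha : 0 < a) (hb : 0 < b)
    (h : -Real.log (a / b) ≤ ε) : b - a ≤ ε * b := by
  have hlog : 1 - a / b ≤ ε := by linarith [Real.log_le_sub_one_of_pos (div_pos ha hb)]
  calc b - a = (1 - a / b) * b := by field_simp
    _ ≤ ε * b := by gcongr

theorem rowDeficit_le (hp : ∀ i, 0 < p i) {ε : ℝ} (hε : 0 ≤ ε) (hrow : ∀ i, 0 < rowSum π i)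
    (hmass : ∑ i, rowSum π i = ∑ i, p i)
    (hratio : ∀ i k, Real.log (rowSum π i / p i) - Real.log (rowSum π k / p k) ≤ ε) :
    rowDeficit p π ≤ ε * ∑ i, p i := by
  rw [rowDeficit, mul_sum]
  refine sum_le_sum fun k _ => sup_le ?_ (mul_nonneg hε (hp k).le)
  obtain ⟨i, -, hi⟩ : ∃ i ∈ univ, p i ≤ rowSum π i :=
    exists_le_of_sum_le ⟨k, mem_univ k⟩ hmass.ge
  have hlog : 0 ≤ Real.log (rowSum π i / p i) := Real.log_nonneg ((one_le_div (hp i)).2 hi)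
  exact sub_le_mul_of_neg_log_div_le (hrow k) (hp k) (by linarith [hratio i k])

theorem rowDeficit_le_of_isMinOn [Nonempty (Fin n)] (hp : ∀ i, 0 < p i) (hq : ∀ j, 0 < q j)
    (hpq : ∑ j, q j = ∑ i, p i) (hα : 0 < α) (hβ : 0 < β) (hπ : π ∈ GammaStar q)
    (hmin : IsMinOn (Freg c p α β) (GammaStar q) π) :
    rowDeficit p π ≤ α * (cOsc c + 2 * β⁻¹ * logSup p) * ∑ i, p i := by
  have hpos := pos_of_isMinOn_Freg hp hq hα.le hβ hπ hmin
  have hε : 0 ≤ α * (cOsc c + 2 * β⁻¹ * logSup p) := by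
    have := cOsc_nonneg c
    have := logSup_nonneg p
    positivity
  exact rowDeficit_le hp hε (fun i => sum_pos (fun j _ => hpos i j) univ_nonempty)
    ((sum_rowSum_of_mem_GammaStar hπ).trans hpq) fun i k =>
      log_rowSum_div_sub_le hp hα hβ hpos
        (gradFreg_le_of_isMinOn (fun i => (hp i).ne') hα.le hβ.le hπ hmin hpos i k)

end RowMarginal

section Rounding

variable {m n : ℕ} {p : Fin m → ℝ} {q : Fin n → ℝ} {π : Matrix (Fin m) (Fin n) ℝ}

/-- The plan `π'` of Algorithm 3, in which every row sum of `π` is scaled down to at most `p`. -/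
def rowClip (p : Fin m → ℝ) (π : Matrix (Fin m) (Fin n) ℝ) : Matrix (Fin m) (Fin n) ℝ :=
  fun i j => min 1 (p i / rowSum π i) * π i j

/-- The rank-one term `Δ_p Δ_qᵀ / ‖Δ_p‖₁` of Algorithm 3 for a plan `π` whose column sums are at
most `q`, so that the column scaling is trivial and `Δ_p = (p - π𝟙)⁺`. -/
def roundCorrection (p : Fin m → ℝ) (q : Fin n → ℝ) (π : Matrix (Fin m) (Fin n) ℝ) :
    Matrix (Fin m) (Fin n) ℝ :=
  fun i j => (p i - rowSum π i)⁺ * (q j - colSum (rowClip p π) j) / rowDeficit p π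

theorem rowDeficit_nonneg : 0 ≤ rowDeficit p π :=
  sum_nonneg fun _ _ => posPart_nonneg _

theorem rowClip_nonneg (hp : ∀ i, 0 ≤ p i) (hπ : ∀ i j, 0 ≤ π i j) (i : Fin m) (j : Fin n) :
    0 ≤ rowClip p π i j :=
  mul_nonneg (le_min zero_le_one (div_nonneg (hp i) (rowSum_nonneg hπ i))) (hπ i j)

theorem rowClip_le (hπ : ∀ i j, 0 ≤ π i j) (i : Fin m) (j : Fin n) : rowClip p π i j ≤ π i j :=
  mul_le_of_le_one_left (hπ i j) (min_le_left _ _)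

theorem rowSum_rowClip (hp : ∀ i, 0 ≤ p i) (hπ : ∀ i j, 0 ≤ π i j) (i : Fin m) :
    rowSum (rowClip p π) i = min (p i) (rowSum π i) := by
  have h : rowSum (rowClip p π) i = min 1 (p i / rowSum π i) * rowSum π i :=
    (mul_sum _ _ _).symm
  rw [h]
  rcases (rowSum_nonneg hπ i).eq_or_lt with h0 | h0
  · rw [← h0, mul_zero, min_eq_right (hp i)]
  · rw [min_mul_of_nonneg _ _ h0.le, one_mul, div_mul_cancel₀ _ h0.ne', min_comm]

theorem sub_rowSum_rowClip (hp : ∀ i, 0 ≤ p i) (hπ : ∀ i j, 0 ≤ π i j) (i : Fin m) :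
    p i - rowSum (rowClip p π) i = (p i - rowSum π i)⁺ := by
  rw [rowSum_rowClip hp hπ, inf_eq_sub_posPart_sub, sub_sub_self]

theorem colSum_rowClip_le (hπ : π ∈ GammaStar q) (j : Fin n) : colSum (rowClip p π) j ≤ q j := by
  rw [← hπ.2]
  exact sum_le_sum fun i _ => rowClip_le hπ.1 i j

theorem sum_rowSum_rowClip (hp : ∀ i, 0 ≤ p i) (hπ : ∀ i j, 0 ≤ π i j) :
    ∑ i, rowSum (rowClip p π) i = ∑ i, p i - rowDeficit p π := by
  rw [rowDeficit, ← sum_sub_distrib]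
  exact sum_congr rfl fun i _ => by rw [← sub_rowSum_rowClip hp hπ, sub_sub_self]

theorem rowClip_mul_min_one_div_colSum (hp : ∀ i, 0 ≤ p i) (hπ : π ∈ GammaStar q) :
    (fun i j => rowClip p π i j * min 1 (q j / colSum (rowClip p π) j)) = rowClip p π := by
  funext i j
  have clip_nonneg := rowClip_nonneg hp hπ.1
  rcases (colSum_nonneg clip_nonneg j).eq_or_lt with h | h
  · have entry_zero : rowClip p π i j = 0 :=
      le_antisymm ((le_colSum clip_nonneg i j).trans_eq h.symm) (clip_nonneg i j)
    rw [entry_zero, zero_mul]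
  · rw [min_eq_left ((one_le_div h).2 (colSum_rowClip_le hπ j)), mul_one]

theorem roundPlan_eq_rowClip_add (hp : ∀ i, 0 ≤ p i) (hπ : π ∈ GammaStar q) :
    roundPlan p q π = rowClip p π + roundCorrection p q π := by
  have hround : roundPlan p q π =
      (fun (M : Matrix (Fin m) (Fin n) ℝ) i j => M i j + (p i - rowSum M i) * (q j - colSum M j) /
        l1vec fun i' => p i' - rowSum M i')
        fun i j => rowClip p π i j * min 1 (q j / colSum (rowClip p π) j) := rfl
  have hnorm : l1vec (fun i => (p i - rowSum π i)⁺) = rowDeficit p π :=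
    sum_congr rfl fun i _ => abs_of_nonneg (posPart_nonneg _)
  rw [hround, rowClip_mul_min_one_div_colSum hp hπ]
  simp only [sub_rowSum_rowClip hp hπ.1, hnorm]
  rfl

theorem roundCorrection_nonneg (hπ : π ∈ GammaStar q) (i : Fin m) (j : Fin n) :
    0 ≤ roundCorrection p q π i j :=
  div_nonneg (mul_nonneg (posPart_nonneg _) (sub_nonneg.2 (colSum_rowClip_le hπ j)))
    rowDeficit_nonneg

theorem sum_roundCorrection (hp : ∀ i, 0 ≤ p i) (hpq : ∑ j, q j = ∑ i, p i)
    (hπ : ∀ i j, 0 ≤ π i j) : ∑ i, ∑ j, roundCorrection p q π i j = rowDeficit p π := by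
  have col_deficit : ∑ j, (q j - colSum (rowClip p π) j) = rowDeficit p π := by
    rw [sum_sub_distrib, sum_colSum, sum_rowSum_rowClip hp hπ, hpq, sub_sub_self]
  simp only [roundCorrection, ← sum_div, ← mul_sum, ← sum_mul, col_deficit]
  exact mul_self_div_self _

theorem frob_roundPlan_sub_frob_le (c : Matrix (Fin m) (Fin n) ℝ) (hp : ∀ i, 0 ≤ p i)
    (hpq : ∑ j, q j = ∑ i, p i) (hπ : π ∈ GammaStar q) :
    frob c (roundPlan p q π) - frob c π ≤ cOsc c * rowDeficit p π := by
  have added := sum_roundCorrection hp hpq hπ.1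
  have removed : ∑ i, ∑ j, (π - rowClip p π) i j = rowDeficit p π := by
    have h : ∑ i, ∑ j, (π - rowClip p π) i j = ∑ i, rowSum π i - ∑ i, rowSum (rowClip p π) i := by
      simp only [Matrix.sub_apply, sum_sub_distrib, rowSum]
    rw [h, sum_rowSum_rowClip hp hπ.1, sum_rowSum_of_mem_GammaStar hπ, hpq, sub_sub_self]
  calc frob c (roundPlan p q π) - frob c π
      = frob c (roundCorrection p q π) - frob c (π - rowClip p π) := by
        rw [roundPlan_eq_rowClip_add hp hπ, frob_add, frob_sub]
        ring
    _ ≤ cOsc c * ∑ i, ∑ j, roundCorrection p q π i j :=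
        frob_sub_frob_le_cOsc_mul c (roundCorrection_nonneg hπ)
          (fun i j => sub_nonneg.2 (rowClip_le hπ.1 i j)) (added.trans removed.symm)
    _ = cOsc c * rowDeficit p π := by rw [added]

end Rounding

section Rate

variable {m n : ℕ} {p : Fin m → ℝ} {q : Fin n → ℝ} {c : Matrix (Fin m) (Fin n) ℝ} {α β : ℝ}
  {π : Matrix (Fin m) (Fin n) ℝ}

theorem frob_le_Freg (hp : ∀ i, 0 < p i) (hα : 0 ≤ α) (hβ : 0 ≤ β) (hπ : ∀ i j, 0 ≤ π i j) :
    frob c π ≤ Freg c p α β π := by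
  have hKLvec := mul_nonneg (inv_nonneg.2 hα)
    (KLvec_nonneg (rowSum_nonneg hπ) (fun i => (hp i).le) fun i h => absurd h (hp i).ne')
  have hKLmat := mul_nonneg (inv_nonneg.2 hβ)
    (KLmat_nonneg hπ (fun i j => (piRef_pos i j).le) fun i j h => absurd h (piRef_pos i j).ne')
  rw [Freg]
  linarith

theorem Freg_le_of_mem_Gamma (hp : ∑ i, p i = 1) (hβ : 0 ≤ β) (hπ : π ∈ Gamma p q) :
    Freg c p α β π ≤ frob c π + β⁻¹ * Real.log (m * n) := by
  have hsum : ∑ i, ∑ j, π i j = 1 := by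
    rw [← hp, ← hπ.2.1]
    rfl
  rw [Freg, hπ.2.1, KLvec_self, mul_zero, add_zero]
  gcongr
  exact KLmat_piRef_le_log hπ.1 hsum

theorem frob_sub_OTval_le (hp : p ∈ simplexPos m) (hq : q ∈ simplexPos n) (hα : 0 ≤ α)
    (hβ : 0 ≤ β) (hπ : π ∈ GammaStar q) (hmin : IsMinOn (Freg c p α β) (GammaStar q) π) :
    frob c π - OTval c p q ≤ β⁻¹ * Real.log (m * n) := by
  have := nonempty_Gamma hp hq
  rw [sub_le_comm]
  refine le_ciInf fun ⟨x, hx⟩ => sub_le_iff_le_add.2 ?_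
  calc frob c π ≤ Freg c p α β π := frob_le_Freg hp.1 hα hβ hπ.1
    _ ≤ Freg c p α β x := hmin ⟨hx.1, hx.2.2⟩
    _ ≤ frob c x + β⁻¹ * Real.log (m * n) := Freg_le_of_mem_Gamma hp.2 hβ hx

theorem frob_roundPlan_sub_OTval_le (hp : p ∈ simplexPos m) (hq : q ∈ simplexPos n) (hα : 0 < α)
    (hβ : 0 < β) (hπ : π ∈ GammaStar q) (hmin : IsMinOn (Freg c p α β) (GammaStar q) π) :
    frob c (roundPlan p q π) - OTval c p q ≤
      β⁻¹ * Real.log (m * n) + α * (cOsc c * (cOsc c + 2 * β⁻¹ * logSup p)) := by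
  have : Nonempty (Fin n) := by
    by_contra h
    rw [not_nonempty_iff] at h
    simpa using hq.2
  have hpq : ∑ j, q j = ∑ i, p i := hq.2.trans hp.2.symm
  have cost := frob_sub_OTval_le hp hq hα.le hβ.le hπ hmin
  have rounding := frob_roundPlan_sub_frob_le c (fun i => (hp.1 i).le) hpq hπ
  have deficit := rowDeficit_le_of_isMinOn hp.1 hq.1 hpq hα hβ hπ hmin
  rw [hp.2, mul_one] at deficit
  linarith [mul_le_mul_of_nonneg_left deficit (cOsc_nonneg c)]

theorem one_add_rpow_sub_rpow_le {x κ : ℝ} (hx : 0 < x) (hκ0 : 0 ≤ κ) (hκ1 : κ ≤ 1) :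
    (1 + x) ^ κ - x ^ κ ≤ κ * x ^ (κ - 1) := by
  have bernoulli : (1 + x⁻¹) ^ κ ≤ 1 + κ * x⁻¹ :=
    rpow_one_add_le_one_add_mul_self (by linarith [inv_pos.2 hx]) hκ0 hκ1
  have factor : 1 + x = x * (1 + x⁻¹) := by
    field_simp
    ring
  rw [factor, Real.mul_rpow hx.le (by positivity), Real.rpow_sub_one hx.ne']
  calc x ^ κ * (1 + x⁻¹) ^ κ - x ^ κ ≤ x ^ κ * (1 + κ * x⁻¹) - x ^ κ := by gcongr
    _ = κ * (x ^ κ / x) := by ring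

theorem inv_one_add_rpow_le {x κ : ℝ} (hx : 0 < x) (hκ : 0 ≤ κ) : ((1 + x) ^ κ)⁻¹ ≤ x ^ (-κ) := by
  rw [Real.rpow_neg hx.le]
  gcongr
  linarith

theorem frob_roundPlan_sub_OTval_le_rpow (hp : p ∈ simplexPos m) (hq : q ∈ simplexPos n)
    {x κ : ℝ} (hx : 0 < x) (hκ0 : 0 < κ) (hκ1 : κ ≤ 1) (hπ : π ∈ GammaStar q)
    (hmin : IsMinOn (Freg c p ((1 + x) ^ κ - x ^ κ) ((1 + x) ^ κ)) (GammaStar q) π) :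
    frob c (roundPlan p q π) - OTval c p q ≤
      Real.log (m * n) * x ^ (-κ) +
        κ * (cOsc c * (cOsc c + 2 * logSup p)) * x ^ (κ - 1) := by
  have := cOsc_nonneg c
  have := logSup_nonneg p
  have hlog : 0 ≤ Real.log (m * n) := by exact_mod_cast Real.log_natCast_nonneg (m * n)
  set β := (1 + x) ^ κ
  set α := β - x ^ κ
  have hβ : 1 ≤ β := Real.one_le_rpow (by linarith) hκ0.le
  have hα : 0 < α := sub_pos.2 (Real.rpow_lt_rpow hx.le (lt_one_add x) hκ0)
  calc frob c (roundPlan p q π) - OTval c p q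
      ≤ β⁻¹ * Real.log (m * n) + α * (cOsc c * (cOsc c + 2 * β⁻¹ * logSup p)) :=
        frob_roundPlan_sub_OTval_le hp hq hα (by linarith) hπ hmin
    _ ≤ x ^ (-κ) * Real.log (m * n) +
          κ * x ^ (κ - 1) * (cOsc c * (cOsc c + 2 * 1 * logSup p)) := by
        gcongr
        · exact inv_one_add_rpow_le hx hκ0.le
        · exact one_add_rpow_sub_rpow_le hx hκ0.le hκ1
        · exact inv_le_one_of_one_le₀ hβ
    _ = Real.log (m * n) * x ^ (-κ) +
          κ * (cOsc c * (cOsc c + 2 * logSup p)) * x ^ (κ - 1) := by ring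

end Rate

/-- Theorem 2, Eq. (13): rate for polynomial schedules `β_t = (1+t)^κ`.
There is a constant `C` such that `⟨c,π̄_t⟩ - OT(p,q) ≤ C(t^{-κ} + t^{κ-1})` for all `t ≥ 1`. -/
theorem regularization_path_polynomial_rate
    {m n : ℕ} (p : Fin m → ℝ) (q : Fin n → ℝ) (c : Matrix (Fin m) (Fin n) ℝ)
    (hp : p ∈ simplexPos m) (hq : q ∈ simplexPos n)
    (κ : ℝ) (hκ0 : 0 < κ) (hκ1 : κ < 1)
    (β : ℕ → ℝ) (hβ : ∀ t, β t = (1 + (t : ℝ)) ^ κ)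
    (πreg : ℕ → Matrix (Fin m) (Fin n) ℝ)
    (hπregmem : ∀ t : ℕ, 1 ≤ t → πreg t ∈ GammaStar q)
    (hπregopt : ∀ t : ℕ, 1 ≤ t → ∀ π' ∈ GammaStar (m := m) q,
      Freg c p (β t - β (t - 1)) (β t) (πreg t) ≤ Freg c p (β t - β (t - 1)) (β t) π') :
    ∃ C : ℝ, ∀ t : ℕ, 1 ≤ t →
      frob c (roundPlan p q (πreg t)) - OTval c p q ≤
        C * ((t : ℝ) ^ (-κ) + (t : ℝ) ^ (κ - 1)) := by
  have hcOsc := cOsc_nonneg c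
  have hlogSup := logSup_nonneg p
  have hA : 0 ≤ Real.log (m * n) := by exact_mod_cast Real.log_natCast_nonneg (m * n)
  refine ⟨Real.log (m * n) + κ * (cOsc c * (cOsc c + 2 * logSup p)), fun t ht => ?_⟩
  have ht0 : (0 : ℝ) < t := by exact_mod_cast ht
  have hβ_pred : β (t - 1) = (t : ℝ) ^ κ := by rw [hβ, Nat.cast_pred ht, add_sub_cancel]
  have hmin : IsMinOn (Freg c p ((1 + t) ^ κ - (t : ℝ) ^ κ) ((1 + t) ^ κ)) (GammaStar q)
      (πreg t) := by
    rw [← hβ_pred, ← hβ t]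
    exact hπregopt t ht
  refine (frob_roundPlan_sub_OTval_le_rpow hp hq ht0 hκ0 hκ1.le (hπregmem t ht) hmin).trans ?_
  have cross : 0 ≤ Real.log (m * n) * (t : ℝ) ^ (κ - 1) +
      κ * (cOsc c * (cOsc c + 2 * logSup p)) * (t : ℝ) ^ (-κ) := by positivity
  linarith

end
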